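/- For every fixed x ∈ ℝ³ and every k ∈ ℝ, the function G(x,y) = e^{ik‖x−y‖}/(4π‖x−y‖) is a fundamental solution of the Helmholtz operator with the Dirac delta at x as forcing: for every smooth compactly supported function φ : ℝ³ → ℂ one has ∫_{ℝ³} G(x,y)·(Δφ(y) + k² φ(y)) dy = −φ(x), where the integral is with respect to Lebesgue measure on ℝ³. -/

import Mathlib

open Complex MeasureTheory

/-- The Laplacian of a function `f : ℝ³ → ℂ`: the sum of its second partial
derivatives along the three coordinate directions. -/
noncomputable def laplacian3 (f : EuclideanSpace ℝ (Fin 3) → ℂ)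
    (y : EuclideanSpace ℝ (Fin 3)) : ℂ :=
  ∑ i : Fin 3,
    fderiv ℝ (fun z => fderiv ℝ f z (EuclideanSpace.single i (1 : ℝ))) y
      (EuclideanSpace.single i (1 : ℝ))

/-- The Helmholtz fundamental solution `G(x,y) = e^{ik‖x−y‖}/(4π‖x−y‖)`. -/
noncomputable def helmholtzKernel (k : ℝ) (x y : EuclideanSpace ℝ (Fin 3)) : ℂ :=
  Complex.exp (Complex.I * (k : ℂ) * (‖x - y‖ : ℝ)) / (4 * (Real.pi : ℂ) * (‖x - y‖ : ℝ))



/-- Regularised profile, as a function of `t = r² + ε²`. -/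
noncomputable def gA (k t : ℝ) : ℂ :=
  Complex.exp (Complex.I * (k : ℂ) * (Real.sqrt t : ℝ)) / (4 * (Real.pi : ℂ) * (Real.sqrt t : ℝ))

/-- First derivative of `gA`. -/
noncomputable def gB (k t : ℝ) : ℂ :=
  Complex.exp (Complex.I * (k : ℂ) * (Real.sqrt t : ℝ)) / (8 * (Real.pi : ℂ)) *
    (Complex.I * k / (Real.sqrt t : ℝ) ^ 2 - 1 / (Real.sqrt t : ℝ) ^ 3)

/-- Second derivative of `gA`. -/
noncomputable def gC (k t : ℝ) : ℂ :=
  Complex.exp (Complex.I * (k : ℂ) * (Real.sqrt t : ℝ)) / (16 * (Real.pi : ℂ)) *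
    (-(k : ℂ) ^ 2 / (Real.sqrt t : ℝ) ^ 3 - 3 * Complex.I * k / (Real.sqrt t : ℝ) ^ 4
      + 3 / (Real.sqrt t : ℝ) ^ 5)

lemma gA_hasDerivAt (k t : ℝ) (ht : 0 < t) : HasDerivAt (gA k) (gB k t) t := by
  have hs : HasDerivAt (fun u : ℝ => ((Real.sqrt u : ℝ) : ℂ)) ((1 / (2 * Real.sqrt t) : ℝ) : ℂ) t :=
    (Real.hasDerivAt_sqrt ht.ne').ofReal_comp
  have hne : ((Real.sqrt t : ℝ) : ℂ) ≠ 0 := by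
    exact_mod_cast (Real.sqrt_pos.2 ht).ne'
  have hpi : (Real.pi : ℂ) ≠ 0 := by exact_mod_cast Real.pi_ne_zero
  have h1 := ((hs.const_mul (Complex.I * (k : ℂ))).cexp).div
    (hs.const_mul (4 * (Real.pi : ℂ))) (mul_ne_zero (mul_ne_zero (by norm_num) hpi) hne)
  refine h1.congr_deriv ?_
  unfold gB
  push_cast
  generalize ((Real.sqrt t : ℝ) : ℂ) = s at *
  field_simp
  ring

lemma gB_hasDerivAt (k t : ℝ) (ht : 0 < t) : HasDerivAt (gB k) (gC k t) t := by
  have hs : HasDerivAt (fun u : ℝ => ((Real.sqrt u : ℝ) : ℂ)) ((1 / (2 * Real.sqrt t) : ℝ) : ℂ) t :=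
    (Real.hasDerivAt_sqrt ht.ne').ofReal_comp
  have hne : ((Real.sqrt t : ℝ) : ℂ) ≠ 0 := by
    exact_mod_cast (Real.sqrt_pos.2 ht).ne'
  have hpi : (Real.pi : ℂ) ≠ 0 := by exact_mod_cast Real.pi_ne_zero
  have h1 := (((hs.const_mul (Complex.I * (k : ℂ))).cexp).div_const (8 * (Real.pi : ℂ))).mul
    (((hasDerivAt_const t (Complex.I * (k : ℂ))).div (hs.pow 2) (pow_ne_zero 2 hne)).sub
      ((hasDerivAt_const t (1 : ℂ)).div (hs.pow 3) (pow_ne_zero 3 hne)))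
  refine h1.congr_deriv ?_
  simp only [Pi.sub_apply, Pi.div_apply, Pi.pow_apply]
  unfold gC
  push_cast
  generalize ((Real.sqrt t : ℝ) : ℂ) = s at *
  have hI : Complex.I ^ 2 = -1 := Complex.I_sq
  field_simp
  ring_nf
  simp only [hI]
  ring

lemma gODE (k t : ℝ) (ht : 0 < t) : 6 * gB k t + 4 * t * gC k t + (k : ℂ) ^ 2 * gA k t = 0 := by
  have hne : ((Real.sqrt t : ℝ) : ℂ) ≠ 0 := by
    exact_mod_cast (Real.sqrt_pos.2 ht).ne'
  have hpi : (Real.pi : ℂ) ≠ 0 := by exact_mod_cast Real.pi_ne_zero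
  have htt : (t : ℂ) = ((Real.sqrt t : ℝ) : ℂ) ^ 2 := by
    rw [← Complex.ofReal_pow, Real.sq_sqrt ht.le]
  unfold gA gB gC
  rw [htt]
  generalize ((Real.sqrt t : ℝ) : ℂ) = s at *
  field_simp
  ring

/-- Regularised kernel centred at the origin. -/
noncomputable def gF (k ε : ℝ) (z : EuclideanSpace ℝ (Fin 3)) : ℂ := gA k (‖z‖ ^ 2 + ε ^ 2)

lemma gF_tpos {ε : ℝ} (hε : 0 < ε) (z : EuclideanSpace ℝ (Fin 3)) : 0 < ‖z‖ ^ 2 + ε ^ 2 := by positivity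

lemma hasFDerivAt_comp_t (g : ℝ → ℂ) (g' : ℂ) (ε : ℝ) (z : EuclideanSpace ℝ (Fin 3))
    (hg : HasDerivAt g g' (‖z‖ ^ 2 + ε ^ 2)) (i : Fin 3) :
    DifferentiableAt ℝ (fun z : EuclideanSpace ℝ (Fin 3) => g (‖z‖ ^ 2 + ε ^ 2)) z ∧
    fderiv ℝ (fun z : EuclideanSpace ℝ (Fin 3) => g (‖z‖ ^ 2 + ε ^ 2)) z (EuclideanSpace.single i (1 : ℝ))
      = 2 * (z i : ℂ) * g' := by
  have h0 : HasFDerivAt (fun z : EuclideanSpace ℝ (Fin 3) => ‖z‖ ^ 2 + ε ^ 2) (2 • (innerSL ℝ z)) z :=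
    (hasStrictFDerivAt_norm_sq z).hasFDerivAt.add_const _
  have h1 := hg.hasFDerivAt.comp z h0
  refine ⟨h1.differentiableAt, ?_⟩
  have h2 := h1.fderiv
  simp only [Function.comp_def] at h2
  rw [h2]
  simp [EuclideanSpace.inner_single_right]
  ring

lemma gF_fderiv (k : ℝ) {ε : ℝ} (hε : 0 < ε) (z : EuclideanSpace ℝ (Fin 3)) (i : Fin 3) :
    fderiv ℝ (gF k ε) z (EuclideanSpace.single i (1 : ℝ))
      = 2 * (z i : ℂ) * gB k (‖z‖ ^ 2 + ε ^ 2) :=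
  (hasFDerivAt_comp_t (gA k) _ ε z (gA_hasDerivAt k _ (gF_tpos hε z)) i).2

lemma gF_fderiv2 (k : ℝ) {ε : ℝ} (hε : 0 < ε) (z : EuclideanSpace ℝ (Fin 3)) (i : Fin 3) :
    fderiv ℝ (fun z => fderiv ℝ (gF k ε) z (EuclideanSpace.single i (1 : ℝ))) z
      (EuclideanSpace.single i (1 : ℝ))
      = 2 * gB k (‖z‖ ^ 2 + ε ^ 2) + 4 * (z i : ℂ) ^ 2 * gC k (‖z‖ ^ 2 + ε ^ 2) := by
  simp_rw [gF_fderiv k hε]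
  obtain ⟨hd, he⟩ := hasFDerivAt_comp_t (gB k) _ ε z (gB_hasDerivAt k _ (gF_tpos hε z)) i
  have hc : HasFDerivAt (fun z : EuclideanSpace ℝ (Fin 3) => 2 * (z i : ℂ))
      ((2 : ℂ) • (Complex.ofRealCLM.comp (EuclideanSpace.proj i : EuclideanSpace ℝ (Fin 3) →L[ℝ] ℝ))) z :=
    ((Complex.ofRealCLM.comp (EuclideanSpace.proj i : EuclideanSpace ℝ (Fin 3) →L[ℝ] ℝ)).hasFDerivAt).const_mul 2
  rw [fderiv_fun_mul hc.differentiableAt hd, hc.fderiv]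
  simp [he]
  ring

lemma gF_laplacian (k : ℝ) {ε : ℝ} (hε : 0 < ε) (z : EuclideanSpace ℝ (Fin 3)) :
    laplacian3 (gF k ε) z + (k : ℂ) ^ 2 * gF k ε z = -4 * ε ^ 2 * gC k (‖z‖ ^ 2 + ε ^ 2) := by
  have hO := gODE k _ (gF_tpos hε z)
  have hn : ‖z‖ ^ 2 = z 0 ^ 2 + z 1 ^ 2 + z 2 ^ 2 := by
    rw [EuclideanSpace.norm_sq_eq]; simp [Fin.sum_univ_three]
  have hn' : (‖z‖ : ℂ) ^ 2 = (z 0 : ℂ) ^ 2 + (z 1 : ℂ) ^ 2 + (z 2 : ℂ) ^ 2 := by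
    exact_mod_cast congrArg (fun r : ℝ => (r : ℂ)) hn
  unfold laplacian3
  simp_rw [gF_fderiv2 k hε]
  simp only [Fin.sum_univ_three]
  unfold gF
  push_cast at hO
  rw [hn'] at hO
  linear_combination hO

lemma gF_contDiff (k : ℝ) {ε : ℝ} (hε : 0 < ε) : ContDiff ℝ (⊤ : ℕ∞) (gF k ε) := by
  have h0 : ContDiff ℝ (⊤ : ℕ∞) (fun z : EuclideanSpace ℝ (Fin 3) => Real.sqrt (‖z‖ ^ 2 + ε ^ 2)) :=
    ((contDiff_norm_sq ℝ).add contDiff_const).sqrt (fun z => (gF_tpos hε z).ne')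
  have h1 : ContDiff ℝ (⊤ : ℕ∞) (fun z : EuclideanSpace ℝ (Fin 3) => ((Real.sqrt (‖z‖ ^ 2 + ε ^ 2) : ℝ) : ℂ)) :=
    Complex.ofRealCLM.contDiff.comp h0
  unfold gF gA
  simp only [div_eq_mul_inv]
  refine ContDiff.mul (contDiff_const.mul h1).cexp ((contDiff_const.mul h1).inv fun z => ?_)
  have : Real.sqrt (‖z‖ ^ 2 + ε ^ 2) ≠ 0 := (Real.sqrt_pos.2 (gF_tpos hε z)).ne'
  simp [this, Real.pi_ne_zero]

lemma ibp_one {F φ : EuclideanSpace ℝ (Fin 3) → ℂ} (hF : ContDiff ℝ 1 F) (hφ : ContDiff ℝ 1 φ)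
    (hs : HasCompactSupport φ) (v : EuclideanSpace ℝ (Fin 3)) :
    ∫ x, F x * fderiv ℝ φ x v = - ∫ x, fderiv ℝ F x v * φ x := by
  have c1 : Continuous fun x => fderiv ℝ F x v :=
    (hF.continuous_fderiv one_ne_zero).clm_apply continuous_const
  have c2 : Continuous fun x => fderiv ℝ φ x v :=
    (hφ.continuous_fderiv one_ne_zero).clm_apply continuous_const
  refine integral_mul_fderiv_eq_neg_fderiv_mul_of_integrable ?_ ?_ ?_
    (fun x _ => (hF.differentiable one_ne_zero) x) (fun x _ => (hφ.differentiable one_ne_zero) x)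
  · exact (c1.mul hφ.continuous).integrable_of_hasCompactSupport hs.mul_left
  · exact (hF.continuous.mul c2).integrable_of_hasCompactSupport (hs.fderiv_apply ℝ v).mul_left
  · exact (hF.continuous.mul hφ.continuous).integrable_of_hasCompactSupport hs.mul_left

lemma contDiff_partial {φ : EuclideanSpace ℝ (Fin 3) → ℂ} (hφ : ContDiff ℝ (⊤ : ℕ∞) φ)
    (v : EuclideanSpace ℝ (Fin 3)) : ContDiff ℝ (⊤ : ℕ∞) (fun z => fderiv ℝ φ z v) :=
  (hφ.fderiv_right (m := (⊤ : ℕ∞)) (by simp)).clm_apply contDiff_const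

lemma one_le_smooth {φ : EuclideanSpace ℝ (Fin 3) → ℂ} (hφ : ContDiff ℝ (⊤ : ℕ∞) φ) :
    ContDiff ℝ 1 φ := hφ.of_le (by exact_mod_cast le_top)

lemma continuous_laplacian3 {φ : EuclideanSpace ℝ (Fin 3) → ℂ} (hφ : ContDiff ℝ (⊤ : ℕ∞) φ) :
    Continuous (laplacian3 φ) := by
  unfold laplacian3
  exact continuous_finsetSum _ fun i _ => (contDiff_partial (contDiff_partial hφ _) _).continuous

lemma hasCompactSupport_laplacian3 {φ : EuclideanSpace ℝ (Fin 3) → ℂ}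
    (hs : HasCompactSupport φ) : HasCompactSupport (laplacian3 φ) := by
  have h : ∀ i : Fin 3, HasCompactSupport fun y => fderiv ℝ (fun z => fderiv ℝ φ z
    (EuclideanSpace.single i (1 : ℝ))) y (EuclideanSpace.single i (1 : ℝ)) := fun i =>
    (hs.fderiv_apply ℝ _).fderiv_apply ℝ _
  convert! ((h 0).add (h 1)).add (h 2) using 1
  funext y
  simp [laplacian3, Fin.sum_univ_three]

lemma green {F φ : EuclideanSpace ℝ (Fin 3) → ℂ} (hF : ContDiff ℝ (⊤ : ℕ∞) F)
    (hφ : ContDiff ℝ (⊤ : ℕ∞) φ) (hs : HasCompactSupport φ) (c : ℂ) :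
    ∫ x, F x * (laplacian3 φ x + c * φ x) = ∫ x, (laplacian3 F x + c * F x) * φ x := by
  have hi : ∀ i : Fin 3, ∫ x, F x * fderiv ℝ (fun z => fderiv ℝ φ z
      (EuclideanSpace.single i (1 : ℝ))) x (EuclideanSpace.single i (1 : ℝ)) =
      ∫ x, fderiv ℝ (fun z => fderiv ℝ F z
      (EuclideanSpace.single i (1 : ℝ))) x (EuclideanSpace.single i (1 : ℝ)) * φ x := by
    intro i
    rw [ibp_one (one_le_smooth hF) (one_le_smooth (contDiff_partial hφ _)) (hs.fderiv_apply ℝ _),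
      ibp_one (one_le_smooth (contDiff_partial hF _)) (one_le_smooth hφ) hs, neg_neg]
  have hl : ∫ x, F x * laplacian3 φ x = ∫ x, laplacian3 F x * φ x := by
    unfold laplacian3
    simp_rw [Finset.mul_sum, Finset.sum_mul]
    rw [integral_finsetSum, integral_finsetSum]
    · exact Finset.sum_congr rfl fun i _ => hi i
    · intro i _
      exact ((contDiff_partial (contDiff_partial hF _) _).continuous.mul
        hφ.continuous).integrable_of_hasCompactSupport hs.mul_left
    · intro i _
      exact (hF.continuous.mul (contDiff_partial (contDiff_partial hφ _)
        _).continuous).integrable_of_hasCompactSupport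
        ((hs.fderiv_apply ℝ _).fderiv_apply ℝ _).mul_left
  have i1 : Integrable fun x => F x * laplacian3 φ x :=
    (hF.continuous.mul (continuous_laplacian3 hφ)).integrable_of_hasCompactSupport
      (hasCompactSupport_laplacian3 hs).mul_left
  have i2 : Integrable fun x => laplacian3 F x * φ x :=
    ((continuous_laplacian3 hF).mul hφ.continuous).integrable_of_hasCompactSupport hs.mul_left
  have i3 : Integrable fun x => c * (F x * φ x) :=
    ((hF.continuous.mul hφ.continuous).integrable_of_hasCompactSupport hs.mul_left).const_mul c
  calc _ = ∫ x, (F x * laplacian3 φ x + c * (F x * φ x)) := by congr 1; funext x; ring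
    _ = ∫ x, (laplacian3 F x * φ x + c * (F x * φ x)) := by
      rw [integral_add i1 i3, integral_add i2 i3, hl]
    _ = _ := by congr 1; funext x; ring

lemma bubble_hasDerivAt (r : ℝ) : HasDerivAt (fun r : ℝ => (r / Real.sqrt (1 + r ^ 2)) ^ 3 / 3)
    (r ^ 2 * (1 / Real.sqrt (1 + r ^ 2) ^ 5)) r := by
  have hp : 0 < 1 + r ^ 2 := by positivity
  have h0 : HasDerivAt (fun r : ℝ => 1 + r ^ 2) (2 * r) r := by
    simpa using (hasDerivAt_pow 2 r).const_add 1
  have hs := h0.sqrt hp.ne'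
  have hn : Real.sqrt (1 + r ^ 2) ≠ 0 := (Real.sqrt_pos.2 hp).ne'
  have h := (((hasDerivAt_id r).div hs hn).pow 3).div_const 3
  refine h.congr_deriv ?_
  have hq : Real.sqrt (1 + r ^ 2) ^ 2 = 1 + r ^ 2 := Real.sq_sqrt hp.le
  simp only [id, Pi.div_apply]
  generalize Real.sqrt (1 + r ^ 2) = s at *
  norm_num
  field_simp
  linear_combination (r^2) * hq

lemma bubble_tendsto : Filter.Tendsto (fun r : ℝ => (r / Real.sqrt (1 + r ^ 2)) ^ 3 / 3)
    Filter.atTop (nhds (1 / 3)) := by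
  have h : Filter.Tendsto (fun r : ℝ => (1 / Real.sqrt (1 + (r⁻¹) ^ 2)) ^ 3 / 3)
      Filter.atTop (nhds ((1 / Real.sqrt (1 + 0 ^ 2)) ^ 3 / 3)) := by
    have : Continuous (fun u : ℝ => (1 / Real.sqrt (1 + u ^ 2)) ^ 3 / 3) := by
      have : ∀ u : ℝ, Real.sqrt (1 + u ^ 2) ≠ 0 := fun u => by positivity
      fun_prop (disch := assumption)
    exact (this.tendsto 0).comp tendsto_inv_atTop_zero
  simp only [ne_eq, OfNat.ofNat_ne_zero, not_false_eq_true, zero_pow, add_zero, Real.sqrt_one,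
    div_one, one_pow] at h
  refine h.congr' ?_
  filter_upwards [Filter.eventually_gt_atTop 0] with r hr
  have : Real.sqrt (1 + r ^ 2) = r * Real.sqrt (1 + (r⁻¹) ^ 2) := by
    rw [show 1 + r ^ 2 = r ^ 2 * (1 + (r⁻¹) ^ 2) by field_simp; ring,
      Real.sqrt_mul (by positivity), Real.sqrt_sq hr.le]
  rw [this]
  have : Real.sqrt (1 + (r⁻¹) ^ 2) ≠ 0 := by positivity
  field_simp

lemma bubble_integrable : Integrable fun w : EuclideanSpace ℝ (Fin 3) =>
    1 / Real.sqrt (1 + ‖w‖ ^ 2) ^ 5 := by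
  have := (integrable_fun_norm_addHaar (volume : Measure (EuclideanSpace ℝ (Fin 3)))
    (f := fun r : ℝ => 1 / Real.sqrt (1 + r ^ 2) ^ 5)).2
  apply this
  simp only [finrank_euclideanSpace, Fintype.card_fin, smul_eq_mul]
  exact integrableOn_Ioi_deriv_of_nonneg' (fun x _ => bubble_hasDerivAt x)
    (fun x _ => mul_nonneg (sq_nonneg x) (one_div_nonneg.2 (pow_nonneg (Real.sqrt_nonneg _) 5)))
    bubble_tendsto

lemma bubble_integral : ∫ w : EuclideanSpace ℝ (Fin 3), 1 / Real.sqrt (1 + ‖w‖ ^ 2) ^ 5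
    = 4 * Real.pi / 3 := by
  rw [integral_fun_norm_addHaar (volume : Measure (EuclideanSpace ℝ (Fin 3)))
    (fun r : ℝ => 1 / Real.sqrt (1 + r ^ 2) ^ 5)]
  simp only [finrank_euclideanSpace, Fintype.card_fin, smul_eq_mul]
  have hb := integral_Ioi_of_hasDerivAt_of_nonneg' (a := 0)
    (g' := fun r : ℝ => r ^ 2 * (1 / Real.sqrt (1 + r ^ 2) ^ 5)) (fun x _ => bubble_hasDerivAt x)
    (fun x _ => mul_nonneg (sq_nonneg x) (one_div_nonneg.2 (pow_nonneg (Real.sqrt_nonneg _) 5)))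
    bubble_tendsto
  rw [hb, Measure.real,
    EuclideanSpace.volume_ball_fin_three]
  simp
  rw [ENNReal.toReal_ofReal (by have := Real.pi_pos; positivity)]
  ring

/-- Profile of the rescaled source term. -/
noncomputable def gK (k u : ℝ) : ℂ :=
  Complex.exp (Complex.I * (k : ℂ) * (u : ℂ)) *
    ((k : ℂ) ^ 2 * (u : ℂ) ^ 2 + 3 * Complex.I * k * u - 3) / (4 * (Real.pi : ℂ))

lemma gK_continuous (k : ℝ) : Continuous (gK k) := by
  unfold gK
  fun_prop

lemma scaled_sqrt {ε : ℝ} (hε : 0 < ε) (w : EuclideanSpace ℝ (Fin 3)) :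
    Real.sqrt (‖ε • w‖ ^ 2 + ε ^ 2) = ε * Real.sqrt (1 + ‖w‖ ^ 2) := by
  rw [norm_smul, Real.norm_of_nonneg hε.le,
    show (ε * ‖w‖) ^ 2 + ε ^ 2 = ε ^ 2 * (1 + ‖w‖ ^ 2) by ring,
    Real.sqrt_mul (by positivity), Real.sqrt_sq hε.le]

lemma source_rescale (k : ℝ) {ε : ℝ} (hε : 0 < ε) (φ : EuclideanSpace ℝ (Fin 3) → ℂ) :
    ∫ z : EuclideanSpace ℝ (Fin 3), (-4 * (ε : ℂ) ^ 2 * gC k (‖z‖ ^ 2 + ε ^ 2)) * φ z =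
    ∫ w : EuclideanSpace ℝ (Fin 3), gK k (Real.sqrt (‖ε • w‖ ^ 2 + ε ^ 2)) * φ (ε • w) *
      ((1 / Real.sqrt (1 + ‖w‖ ^ 2) ^ 5 : ℝ) : ℂ) := by
  have h := Measure.integral_comp_smul_of_nonneg
    (volume : Measure (EuclideanSpace ℝ (Fin 3)))
    (fun z => (-4 * (ε : ℂ) ^ 2 * gC k (‖z‖ ^ 2 + ε ^ 2)) * φ z) ε (hR := hε.le)
  have hεc : (ε : ℂ) ≠ 0 := by exact_mod_cast hε.ne'
  simp only [finrank_euclideanSpace, Fintype.card_fin] at h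
  have h' : ∫ z : EuclideanSpace ℝ (Fin 3), (-4 * (ε : ℂ) ^ 2 * gC k (‖z‖ ^ 2 + ε ^ 2)) * φ z =
      (ε : ℂ) ^ 3 * ∫ w : EuclideanSpace ℝ (Fin 3),
        (-4 * (ε : ℂ) ^ 2 * gC k (‖ε • w‖ ^ 2 + ε ^ 2)) * φ (ε • w) := by
    rw [h, Complex.real_smul]
    push_cast
    rw [← mul_assoc, mul_inv_cancel₀ (pow_ne_zero 3 hεc), one_mul]
  rw [h', ← integral_const_mul]
  congr 1
  funext w
  unfold gC gK
  rw [scaled_sqrt hε]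
  have hs : ((Real.sqrt (1 + ‖w‖ ^ 2) : ℝ) : ℂ) ≠ 0 := by
    have : Real.sqrt (1 + ‖w‖ ^ 2) ≠ 0 := by positivity
    exact_mod_cast this
  have hpi : (Real.pi : ℂ) ≠ 0 := by exact_mod_cast Real.pi_ne_zero
  push_cast
  generalize ((Real.sqrt (1 + ‖w‖ ^ 2) : ℝ) : ℂ) = s at *
  field_simp
  ring

lemma source_bound (k : ℝ) {φ : EuclideanSpace ℝ (Fin 3) → ℂ} (hφ : Continuous φ)
    (hs : HasCompactSupport φ) : ∃ C : ℝ, ∀ ε ∈ Set.Icc (0 : ℝ) 1, ∀ y,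
      ‖gK k (Real.sqrt (‖y‖ ^ 2 + ε ^ 2)) * φ y‖ ≤ C := by
  have hK : IsCompact (Set.Icc (0 : ℝ) 1 ×ˢ tsupport φ) := isCompact_Icc.prod hs
  have hc : Continuous fun p : ℝ × EuclideanSpace ℝ (Fin 3) =>
      gK k (Real.sqrt (‖p.2‖ ^ 2 + p.1 ^ 2)) * φ p.2 :=
    ((gK_continuous k).comp (by fun_prop)).mul (hφ.comp continuous_snd)
  obtain ⟨C, hC⟩ := hK.exists_bound_of_continuousOn hc.continuousOn
  refine ⟨max C 0, fun ε hε y => ?_⟩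
  by_cases hy : y ∈ tsupport φ
  · exact (hC (ε, y) ⟨hε, hy⟩).trans (le_max_left _ _)
  · rw [image_eq_zero_of_notMem_tsupport hy]
    simp

lemma source_tendsto (k : ℝ) {φ : EuclideanSpace ℝ (Fin 3) → ℂ} (hφ : Continuous φ)
    (hs : HasCompactSupport φ) :
    Filter.Tendsto (fun ε : ℝ => ∫ w : EuclideanSpace ℝ (Fin 3),
      gK k (Real.sqrt (‖ε • w‖ ^ 2 + ε ^ 2)) * φ (ε • w) *
      ((1 / Real.sqrt (1 + ‖w‖ ^ 2) ^ 5 : ℝ) : ℂ)) (nhdsWithin 0 (Set.Ioi 0))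
      (nhds (-φ 0)) := by
  obtain ⟨C, hC⟩ := source_bound k hφ hs
  have hpi : (Real.pi : ℂ) ≠ 0 := by exact_mod_cast Real.pi_ne_zero
  have hlim : ∫ w : EuclideanSpace ℝ (Fin 3), gK k 0 * φ 0 *
      ((1 / Real.sqrt (1 + ‖w‖ ^ 2) ^ 5 : ℝ) : ℂ) = -φ 0 := by
    rw [integral_const_mul, integral_complex_ofReal, bubble_integral]
    unfold gK
    push_cast
    simp
    field_simp
  rw [← hlim]
  have hcw : Continuous fun w : EuclideanSpace ℝ (Fin 3) =>
      ((1 / Real.sqrt (1 + ‖w‖ ^ 2) ^ 5 : ℝ) : ℂ) := by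
    refine Complex.continuous_ofReal.comp (continuous_const.div (by fun_prop) fun w => ?_)
    positivity
  refine tendsto_integral_filter_of_dominated_convergence
    (fun w => C * (1 / Real.sqrt (1 + ‖w‖ ^ 2) ^ 5)) ?_ ?_ (bubble_integrable.const_mul C) ?_
  · refine Filter.Eventually.of_forall fun ε => Continuous.aestronglyMeasurable ?_
    exact (((gK_continuous k).comp (by fun_prop)).mul (hφ.comp (by fun_prop))).mul hcw
  · have h1 : ∀ᶠ ε : ℝ in nhdsWithin 0 (Set.Ioi 0), ε ∈ Set.Ioc (0 : ℝ) 1 :=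
      Ioc_mem_nhdsGT one_pos
    filter_upwards [h1] with ε hε
    refine Filter.Eventually.of_forall fun w => ?_
    rw [norm_mul]
    have : ‖((1 / Real.sqrt (1 + ‖w‖ ^ 2) ^ 5 : ℝ) : ℂ)‖ = 1 / Real.sqrt (1 + ‖w‖ ^ 2) ^ 5 := by
      rw [Complex.norm_real, Real.norm_of_nonneg (by positivity)]
    rw [this]
    exact mul_le_mul_of_nonneg_right (hC ε ⟨hε.1.le, hε.2⟩ _) (by positivity)
  · refine Filter.Eventually.of_forall fun w => ?_
    refine Filter.Tendsto.mul_const _ ?_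
    have hc : Continuous fun ε : ℝ => gK k (Real.sqrt (‖ε • w‖ ^ 2 + ε ^ 2)) * φ (ε • w) :=
      ((gK_continuous k).comp (by fun_prop)).mul (hφ.comp (by fun_prop))
    have := (hc.tendsto 0).mono_left (nhdsWithin_le_nhds (s := Set.Ioi 0))
    simpa using this

lemma gA_norm (k t : ℝ) : ‖gA k t‖ = 1 / (4 * Real.pi * Real.sqrt t) := by
  unfold gA
  rw [norm_div, show Complex.I * (k : ℂ) * (Real.sqrt t : ℝ) = ((k * Real.sqrt t : ℝ) : ℂ) * Complex.I by
    push_cast; ring, Complex.norm_exp_ofReal_mul_I]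
  congr 1
  rw [show 4 * (Real.pi : ℂ) * (Real.sqrt t : ℝ) = ((4 * Real.pi * Real.sqrt t : ℝ) : ℂ) by
    push_cast; ring, Complex.norm_real, Real.norm_of_nonneg (by positivity)]

lemma inv_norm_locallyIntegrable :
    LocallyIntegrable (fun z : EuclideanSpace ℝ (Fin 3) => 1 / (4 * Real.pi * ‖z‖)) := by
  refine locallyIntegrable_of_norm_le_rpow (C := 1 / (4 * Real.pi)) (α := 1) (by simp) (by simp)
    (Filter.Eventually.of_forall fun z => ?_) ?_
  · rw [Real.norm_of_nonneg (by positivity), Real.rpow_neg_one]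
    apply le_of_eq
    rw [one_div, one_div, mul_inv]
  · exact Measurable.aestronglyMeasurable (by fun_prop)

lemma kernel_tendsto (k : ℝ) {ψ : EuclideanSpace ℝ (Fin 3) → ℂ} (hψ : Continuous ψ)
    (hs : HasCompactSupport ψ) :
    Filter.Tendsto (fun ε : ℝ => ∫ z : EuclideanSpace ℝ (Fin 3), gF k ε z * ψ z)
      (nhdsWithin 0 (Set.Ioi 0)) (nhds (∫ z, gA k (‖z‖ ^ 2) * ψ z)) := by
  have hb : Integrable fun z : EuclideanSpace ℝ (Fin 3) => ‖ψ z‖ * (1 / (4 * Real.pi * ‖z‖)) := by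
    simpa only [smul_eq_mul] using
      inv_norm_locallyIntegrable.integrable_smul_left_of_hasCompactSupport hψ.norm hs.norm
  have hmeas : ∀ k ε : ℝ, Measurable (gF k ε) := by
    intro k ε
    unfold gF gA
    fun_prop
  refine tendsto_integral_filter_of_dominated_convergence _ ?_ ?_ hb ?_
  · exact Filter.Eventually.of_forall fun ε =>
      ((hmeas k ε).mul hψ.measurable).aestronglyMeasurable
  · have hae : ∀ᵐ z : EuclideanSpace ℝ (Fin 3), z ≠ 0 := by
      simp [ae_iff]
    refine Filter.Eventually.of_forall fun ε => ?_
    filter_upwards [hae] with z hz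
    rw [norm_mul, mul_comm]
    refine mul_le_mul_of_nonneg_left ?_ (norm_nonneg _)
    unfold gF
    rw [gA_norm]
    have hz' : 0 < ‖z‖ := norm_pos_iff.2 hz
    have : ‖z‖ ≤ Real.sqrt (‖z‖ ^ 2 + ε ^ 2) := Real.le_sqrt_of_sq_le (by nlinarith [sq_nonneg ε])
    have := Real.pi_pos
    gcongr
  · have hae : ∀ᵐ z : EuclideanSpace ℝ (Fin 3), z ≠ 0 := by
      simp [ae_iff]
    filter_upwards [hae] with z hz
    refine Filter.Tendsto.mul_const _ ?_
    have hz' : 0 < ‖z‖ ^ 2 := by have := norm_pos_iff.2 hz; positivity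
    have h1 : ContinuousAt (gA k) (‖z‖ ^ 2) := (gA_hasDerivAt k _ hz').continuousAt
    have h2 : Filter.Tendsto (fun ε : ℝ => ‖z‖ ^ 2 + ε ^ 2) (nhdsWithin 0 (Set.Ioi 0))
        (nhds (‖z‖ ^ 2)) := by
      have hc : Continuous fun ε : ℝ => ‖z‖ ^ 2 + ε ^ 2 := by fun_prop
      simpa using (hc.tendsto 0).mono_left (nhdsWithin_le_nhds (s := Set.Ioi 0))
    exact h1.tendsto.comp h2

lemma origin_case (k : ℝ) {φ : EuclideanSpace ℝ (Fin 3) → ℂ} (hφ : ContDiff ℝ (⊤ : ℕ∞) φ)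
    (hs : HasCompactSupport φ) :
    ∫ z, gA k (‖z‖ ^ 2) * (laplacian3 φ z + (k : ℂ) ^ 2 * φ z) = -φ 0 := by
  have hm : HasCompactSupport (fun z => (k : ℂ) ^ 2 * φ z) :=
    HasCompactSupport.mul_left (f := fun _ => (k : ℂ) ^ 2) hs
  have hcont : Continuous (fun z => laplacian3 φ z + (k : ℂ) ^ 2 * φ z) :=
    (continuous_laplacian3 hφ).add (continuous_const.mul hφ.continuous)
  have hcs : HasCompactSupport (fun z => laplacian3 φ z + (k : ℂ) ^ 2 * φ z) :=
    HasCompactSupport.add (hasCompactSupport_laplacian3 hs) hm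
  have h1 := kernel_tendsto k hcont hcs
  have h2 := source_tendsto k hφ.continuous hs
  have h3 : ∀ ε : ℝ, 0 < ε →
      ∫ w : EuclideanSpace ℝ (Fin 3), gK k (Real.sqrt (‖ε • w‖ ^ 2 + ε ^ 2)) * φ (ε • w) *
      ((1 / Real.sqrt (1 + ‖w‖ ^ 2) ^ 5 : ℝ) : ℂ) =
      ∫ z, gF k ε z * (laplacian3 φ z + (k : ℂ) ^ 2 * φ z) := by
    intro ε hε
    rw [← source_rescale k hε φ, green (gF_contDiff k hε) hφ hs ((k : ℂ) ^ 2)]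
    refine integral_congr_ae (Filter.Eventually.of_forall fun z => ?_)
    beta_reduce
    rw [gF_laplacian k hε z]
  refine tendsto_nhds_unique h1 (Filter.Tendsto.congr' ?_ h2)
  filter_upwards [self_mem_nhdsWithin] with ε hε
  exact h3 ε hε

lemma laplacian3_translate (φ : EuclideanSpace ℝ (Fin 3) → ℂ) (x z : EuclideanSpace ℝ (Fin 3)) :
    laplacian3 (fun z => φ (x + z)) z = laplacian3 φ (x + z) := by
  unfold laplacian3
  refine Finset.sum_congr rfl fun i _ => ?_
  simp_rw [fderiv_comp_add_left]
  rw [fderiv_comp_add_left (f := fun y => fderiv ℝ φ y (EuclideanSpace.single i (1 : ℝ)))]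

theorem helmholtzKernel_fundamental_solution (x : EuclideanSpace ℝ (Fin 3)) (k : ℝ)
    (φ : EuclideanSpace ℝ (Fin 3) → ℂ) (hφ : ContDiff ℝ (⊤ : ℕ∞) φ)
    (hsupp : HasCompactSupport φ) :
    ∫ y, helmholtzKernel k x y * (laplacian3 φ y + (k : ℂ) ^ 2 * φ y)
        ∂(volume : Measure (EuclideanSpace ℝ (Fin 3)))
      = -φ x := by
  have hc : ContDiff ℝ (⊤ : ℕ∞) (fun z => φ (x + z)) :=
    hφ.comp (contDiff_const.add contDiff_id)
  have hk : HasCompactSupport (fun z => φ (x + z)) :=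
    hsupp.comp_homeomorph (Homeomorph.addLeft x)
  have h := origin_case k hc hk
  simp only [add_zero, laplacian3_translate] at h
  rw [← h, ← integral_add_left_eq_self _ x]
  congr 1
  funext z
  congr 1
  unfold helmholtzKernel gA
  rw [Real.sqrt_sq (norm_nonneg _), show x - (x + z) = -z by abel, norm_neg]
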